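/- Fix n ∈ ℕ, let ε = 2^{−4n} and P_k = (k+1) + ε(k+1)² for 0 ≤ k ≤ 2^n − 1. For 0 ≤ l ≤ n and 0 ≤ i ≤ 2^{n−l} − 1, let N^l_i = {P_k : i·2^l ≤ k ≤ (i+1)·2^l − 1}, and define the average-linkage distance d(X,Y) = (1/(|X||Y|)) ∑_{x∈X, y∈Y} |x − y|. Then for 0 ≤ l ≤ n − 1 and 0 ≤ i ≤ 2^{n−l} − 2: 0 ≤ d(N^l_i, N^l_{i+1}) − 2^l ≤ 2^{4n−1}·ε; in particular |d(N^l_i, N^l_{i+1}) − 2^l| ≤ 1/2. -/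

import Mathlib

/-!
Since `pt n` is strictly increasing, every point of the node `N^l_{i+1}` lies above every point of
`N^l_i`, so no absolute value is needed and the average distance is the difference of the two
means. Writing `M = 2^l`, this is the mean over `j < M` of `P_{(i+1)M+j} - P_{iM+j}`
(`avgDist_node_eq`). Each such difference is `M + ε ((a + M)² - a²)` with `a = iM + j + 1` and
`a + M ≤ 2^n`, hence lies in `[M, M + ε 2^(2n)]`; finally `2n ≤ 4n - 1` as `n ≥ 1`.
-/

/-- `ε = 2^(-4n)`. -/
noncomputable def eps (n : ℕ) : ℝ := ((2 : ℝ) ^ (4 * n))⁻¹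

/-- The point `P_k = (k+1) + ε (k+1)^2`. -/
noncomputable def pt (n k : ℕ) : ℝ := ((k : ℝ) + 1) + eps n * ((k : ℝ) + 1) ^ 2

/-- The node `N^l_i = {P_k : i·2^l ≤ k ≤ (i+1)·2^l − 1}` of the complete binary tree. -/
noncomputable def node (n l i : ℕ) : Finset ℝ :=
  (Finset.Icc (i * 2 ^ l) ((i + 1) * 2 ^ l - 1)).image (pt n)

/-- The average-linkage distance between finite sets of reals. -/
noncomputable def avgDist (X Y : Finset ℝ) : ℝ :=
  (∑ x ∈ X, ∑ y ∈ Y, |x - y|) / ((X.card : ℝ) * (Y.card : ℝ))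

lemma eps_pos (n : ℕ) : 0 < eps n := by unfold eps; positivity

lemma pt_strictMono (n : ℕ) : StrictMono (pt n) := by
  intro a b h
  have h' : (a : ℝ) < b := by exact_mod_cast h
  have := eps_pos n
  unfold pt
  gcongr

/-- A node is the injective image of `range (2 ^ l)`, the form in which two neighbouring nodes can
be summed over the same index set. -/
lemma node_eq (n l i : ℕ) :
    node n l i = (Finset.range (2 ^ l)).image (fun j => pt n (i * 2 ^ l + j)) := by
  have hM : 0 < 2 ^ l := by positivity
  unfold node
  ext x
  simp only [Finset.mem_image, Finset.mem_Icc, Finset.mem_range, add_mul, one_mul]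
  constructor
  · rintro ⟨k, ⟨h1, h2⟩, rfl⟩
    exact ⟨k - i * 2 ^ l, by omega, by congr 1; omega⟩
  · rintro ⟨j, hj, rfl⟩
    exact ⟨_, ⟨by omega, by omega⟩, rfl⟩

lemma pt_shift_injective (n a : ℕ) : Function.Injective (fun j => pt n (a + j)) := by
  intro x y h
  have := (pt_strictMono n).injective h
  omega

lemma avgDist_node_eq (n l i : ℕ) :
    avgDist (node n l i) (node n l (i + 1)) =
      (∑ j ∈ Finset.range (2 ^ l), (pt n ((i + 1) * 2 ^ l + j) - pt n (i * 2 ^ l + j))) / 2 ^ l := by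
  have hi := pt_shift_injective n (i * 2 ^ l)
  have hi' := pt_shift_injective n ((i + 1) * 2 ^ l)
  rw [avgDist, node_eq, node_eq, Finset.card_image_of_injective _ hi,
    Finset.card_image_of_injective _ hi', Finset.sum_image (fun _ _ _ _ h => hi h)]
  have key : ∀ j ∈ Finset.range (2 ^ l),
      ∑ y ∈ (Finset.range (2 ^ l)).image (fun k => pt n ((i + 1) * 2 ^ l + k)),
        |pt n (i * 2 ^ l + j) - y| =
      ∑ k ∈ Finset.range (2 ^ l), (pt n ((i + 1) * 2 ^ l + k) - pt n (i * 2 ^ l + j)) := by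
    intro j hj
    rw [Finset.sum_image (fun _ _ _ _ h => hi' h)]
    refine Finset.sum_congr rfl fun k _ => ?_
    have hj := Finset.mem_range.1 hj
    have : pt n (i * 2 ^ l + j) < pt n ((i + 1) * 2 ^ l + k) :=
      pt_strictMono n (by rw [add_mul]; omega)
    rw [abs_sub_comm, abs_of_pos (sub_pos.2 this)]
  rw [Finset.sum_congr rfl key]
  simp only [Finset.sum_sub_distrib, Finset.sum_const, Finset.card_range, nsmul_eq_mul,
    ← Finset.mul_sum]
  push_cast
  field_simp

lemma pt_diff_bounds (n l i j : ℕ) (hj : j < 2 ^ l) (h : (i + 2) * 2 ^ l ≤ 2 ^ n) :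
    (2 : ℝ) ^ l ≤ pt n ((i + 1) * 2 ^ l + j) - pt n (i * 2 ^ l + j) ∧
      pt n ((i + 1) * 2 ^ l + j) - pt n (i * 2 ^ l + j) ≤ 2 ^ l + 2 ^ (2 * n) * eps n := by
  have he := eps_pos n
  have ha : ((i : ℝ) * 2 ^ l + j + 1) + 2 ^ l ≤ 2 ^ n := by
    have : (i * 2 ^ l + j + 1) + 2 ^ l ≤ 2 ^ n := by
      have : (i + 2) * 2 ^ l = i * 2 ^ l + 2 ^ l + 2 ^ l := by ring
      omega
    exact_mod_cast this
  have ha0 : (0 : ℝ) ≤ (i : ℝ) * 2 ^ l + j + 1 := by positivity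
  have hM : (0 : ℝ) < 2 ^ l := by positivity
  have hd : pt n ((i + 1) * 2 ^ l + j) - pt n (i * 2 ^ l + j) = 2 ^ l +
      ((((i : ℝ) * 2 ^ l + j + 1) + 2 ^ l) ^ 2 - ((i : ℝ) * 2 ^ l + j + 1) ^ 2) * eps n := by
    unfold pt
    push_cast
    ring
  rw [hd]
  generalize (i : ℝ) * 2 ^ l + j + 1 = a at *
  have h1 : 0 ≤ (a + 2 ^ l) ^ 2 - a ^ 2 := by nlinarith
  have h2 : (a + 2 ^ l) ^ 2 - a ^ 2 ≤ 2 ^ (2 * n) := by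
    have : (a + 2 ^ l) ^ 2 ≤ ((2 : ℝ) ^ n) ^ 2 := by gcongr
    rw [mul_comm, pow_mul]
    nlinarith [sq_nonneg a]
  exact ⟨by nlinarith, by gcongr⟩

theorem avgDist_adjacent_close_to_pow (n l i : ℕ)
    (hl : l + 1 ≤ n) (hi : i + 2 ≤ 2 ^ (n - l)) :
    (0 ≤ avgDist (node n l i) (node n l (i + 1)) - 2 ^ l ∧
      avgDist (node n l i) (node n l (i + 1)) - 2 ^ l ≤ 2 ^ (4 * n - 1) * eps n) ∧
    |avgDist (node n l i) (node n l (i + 1)) - 2 ^ l| ≤ 1 / 2 := by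
  have h : (i + 2) * 2 ^ l ≤ 2 ^ n := by
    calc (i + 2) * 2 ^ l ≤ 2 ^ (n - l) * 2 ^ l := by gcongr
      _ = 2 ^ n := by rw [← pow_add]; congr 1; omega
  have hM : (0 : ℝ) < 2 ^ l := by positivity
  have hhalf : (2 : ℝ) ^ (4 * n - 1) * eps n = 1 / 2 := by
    have : (2 : ℝ) ^ (4 * n) = 2 ^ (4 * n - 1) * 2 := by
      rw [← pow_succ]; congr 1; omega
    rw [eps, this]
    field_simp
  have hlow : 0 ≤ avgDist (node n l i) (node n l (i + 1)) - 2 ^ l := by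
    rw [avgDist_node_eq, sub_nonneg, le_div_iff₀ hM]
    have := Finset.card_nsmul_le_sum (Finset.range (2 ^ l)) _ _
      fun j hj => (pt_diff_bounds n l i j (Finset.mem_range.1 hj) h).1
    simpa using this
  have hup : avgDist (node n l i) (node n l (i + 1)) - 2 ^ l ≤ 2 ^ (4 * n - 1) * eps n := by
    have h1 : avgDist (node n l i) (node n l (i + 1)) ≤ 2 ^ l + 2 ^ (2 * n) * eps n := by
      rw [avgDist_node_eq, div_le_iff₀ hM, mul_comm _ ((2 : ℝ) ^ l)]
      have := Finset.sum_le_card_nsmul (Finset.range (2 ^ l)) _ _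
        fun j hj => (pt_diff_bounds n l i j (Finset.mem_range.1 hj) h).2
      simpa only [Finset.card_range, nsmul_eq_mul, Nat.cast_pow, Nat.cast_ofNat] using this
    have h2 : (2 : ℝ) ^ (2 * n) * eps n ≤ 2 ^ (4 * n - 1) * eps n :=
      mul_le_mul_of_nonneg_right (pow_le_pow_right₀ (by norm_num) (by omega)) (eps_pos n).le
    linarith
  exact ⟨⟨hlow, hup⟩, by rw [abs_of_nonneg hlow, ← hhalf]; exact hup⟩
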